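/- arXiv:math/0210139 — 2 statements merged into one kernel-verified Lean document; each statement's English description precedes it below -/
import Mathlib

section
/- Let A be a unital complex *-algebra, q a nonzero real number, and x₀ = x₀*, x₁, …, x_n ∈ A. Let u''_{(2n+1)} be the 2^{n+1} × 2^{n+1} matrix obtained from the odd unipotent u_{(2n+1)} (built from generators labelled x₁, …, x_{n+1}) by substituting x₁ ↦ x₀, x₁* ↦ x₀, and x_{j+1} ↦ x_j for j = 1, …, n. Then u''_{(2n+1)} equals the matrix obtained from u_{(2n)} by replacing the generator x₀ with the 2 × 2 matrix [[0, x₀],[x₀, 0]] and each generator x_j (j ≥ 1) with x_j·I₂ (i.e. the entrywise Kronecker substitution of u_{(2n)} with these 2 × 2 blocks). Consequently the unipotency of u''_{(2n+1)} yields exactly the S^{2n}_q relations, so A(S^{2n}_q) is the quotient of A(S^{2n+1}_q) by the *-ideal generated by x₁ − x₁*. -/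
/-- Partial radii for the quantum Euclidean space/even sphere:
`s 0 = x₀ * x₀` and `s (i+1) = s i + (x (i+1))* * x (i+1)`. -/
def sEven {A : Type*} [Ring A] [StarRing A] (x : ℕ → A) : ℕ → A
  | 0 => x 0 * x 0
  | i + 1 => sEven x i + star (x (i + 1)) * x (i + 1)

/-- The defining relations of the even quantum Euclidean sphere `S^{2n}_q`. -/
def EvenSphereRel {A : Type*} [Ring A] [Algebra ℂ A] [StarRing A]
    (q : ℝ) (n : ℕ) (x : ℕ → A) : Prop :=
  (∀ i j : ℕ, i < j → j ≤ n → x i * x j = (q : ℂ) • (x j * x i)) ∧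
  (∀ i j : ℕ, i ≤ n → j ≤ n → i ≠ j →
    star (x i) * x j = (q : ℂ) • (x j * star (x i))) ∧
  (∀ i : ℕ, 1 ≤ i → i ≤ n →
    x i * star (x i) - star (x i) * x i = (1 - ((q : ℂ) ^ 2)⁻¹) • sEven x (i - 1)) ∧
  sEven x n = 1

/-- The recursively defined matrices `u_{(2k)}`:  `u_{(0)} = x₀` and
`u_{(2k)} = [[q⁻¹ u_{(2k-2)}, x_k · 1], [x_k* · 1, -u_{(2k-2)}]]`, as `2^k × 2^k`
matrices over `A`.  The odd matrix `u_{(2k-1)}` is obtained by substituting `x₀ ↦ 0`. -/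
noncomputable def uMat {A : Type*} [Ring A] [Algebra ℂ A] [StarRing A] (q : ℝ) (x : ℕ → A) :
    (k : ℕ) → Matrix (Fin (2 ^ k)) (Fin (2 ^ k)) A
  | 0 => Matrix.of fun _ _ => x 0
  | k + 1 =>
    Matrix.reindex (finSumFinEquiv.trans (finCongr (by rw [pow_succ, mul_two])))
      (finSumFinEquiv.trans (finCongr (by rw [pow_succ, mul_two])))
      (Matrix.fromBlocks ((q : ℂ)⁻¹ • uMat q x k)
        (x (k + 1) • (1 : Matrix (Fin (2 ^ k)) (Fin (2 ^ k)) A))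
        (star (x (k + 1)) • (1 : Matrix (Fin (2 ^ k)) (Fin (2 ^ k)) A))
        (-uMat q x k))

/-- The block index equivalence. -/
def eBlk (k : ℕ) : Fin (2 ^ k) ⊕ Fin (2 ^ k) ≃ Fin (2 ^ (k + 1)) :=
  finSumFinEquiv.trans (finCongr (by rw [pow_succ, mul_two]))

theorem uMat_succ' {A : Type*} [Ring A] [Algebra ℂ A] [StarRing A] (q : ℝ) (x : ℕ → A) (k : ℕ) :
    uMat q x (k + 1) = Matrix.reindex (eBlk k) (eBlk k)
      (Matrix.fromBlocks ((q : ℂ)⁻¹ • uMat q x k)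
        (x (k + 1) • (1 : Matrix (Fin (2 ^ k)) (Fin (2 ^ k)) A))
        (star (x (k + 1)) • (1 : Matrix (Fin (2 ^ k)) (Fin (2 ^ k)) A))
        (-uMat q x k)) := rfl

theorem uMat_succ_apply {A : Type*} [Ring A] [Algebra ℂ A] [StarRing A] (q : ℝ) (x : ℕ → A)
    (k : ℕ) (i j : Fin (2 ^ k) ⊕ Fin (2 ^ k)) :
    uMat q x (k + 1) (eBlk k i) (eBlk k j) =
      (Matrix.fromBlocks ((q : ℂ)⁻¹ • uMat q x k)
        (x (k + 1) • (1 : Matrix (Fin (2 ^ k)) (Fin (2 ^ k)) A))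
        (star (x (k + 1)) • (1 : Matrix (Fin (2 ^ k)) (Fin (2 ^ k)) A))
        (-uMat q x k)) i j := by
  rw [uMat_succ']; simp

theorem uMat_mem {A : Type*} [Ring A] [Algebra ℂ A] [StarRing A] (q : ℝ) (x : ℕ → A)
    (S : Submodule ℂ A) (k : ℕ) :
    (∀ i j, uMat q x k i j ∈ S) ↔
      x 0 ∈ S ∧ ∀ m, 1 ≤ m → m ≤ k → x m ∈ S ∧ star (x m) ∈ S := by
  induction k with
  | zero =>
    constructor
    · intro h
      exact ⟨by simpa [uMat] using h 0 0, fun m h1 h2 => by omega⟩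
    · intro h i j
      simpa [uMat] using h.1
  | succ k ih =>
    have key : (∀ i j, uMat q x (k + 1) i j ∈ S) ↔
        (∀ i j, uMat q x k i j ∈ S) ∧ x (k + 1) ∈ S ∧ star (x (k + 1)) ∈ S := by
      constructor
      · intro h
        have z : Fin (2 ^ k) := ⟨0, by positivity⟩
        refine ⟨fun i j => ?_, ?_, ?_⟩
        · have := h (eBlk k (.inr i)) (eBlk k (.inr j))
          rw [uMat_succ_apply] at this
          simpa using this
        · have := h (eBlk k (.inl z)) (eBlk k (.inr z))
          rw [uMat_succ_apply] at this
          simpa using this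
        · have := h (eBlk k (.inr z)) (eBlk k (.inl z))
          rw [uMat_succ_apply] at this
          simpa using this
      · rintro ⟨h, h1, h2⟩ i j
        obtain ⟨i, rfl⟩ := (eBlk k).surjective i
        obtain ⟨j, rfl⟩ := (eBlk k).surjective j
        rw [uMat_succ_apply]
        rcases i with i | i <;> rcases j with j | j
        · simpa using S.smul_mem _ (h i j)
        · by_cases hij : i = j <;> simp [hij, Matrix.one_apply, h1]
        · by_cases hij : i = j <;> simp [hij, Matrix.one_apply, h2]
        · simpa using h i j
    rw [key, ih]
    constructor
    · rintro ⟨⟨h0, h⟩, h1⟩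
      refine ⟨h0, fun m hm1 hm2 => ?_⟩
      rcases Nat.lt_or_ge k m with hm | hm
      · obtain rfl : m = k + 1 := by omega
        exact h1
      · exact h m hm1 hm
    · rintro ⟨h0, h⟩
      exact ⟨⟨h0, fun m h1 h2 => h m h1 (by omega)⟩, h _ (by omega) le_rfl⟩

theorem uMat_sq_step {A : Type*} [Ring A] [Algebra ℂ A] [StarRing A] (q : ℝ) (hq : q ≠ 0)
    (x : ℕ → A) (k : ℕ) (c : A) :
    uMat q x (k + 1) * uMat q x (k + 1) = c • 1 ↔
      (∀ i j, uMat q x k i j * x (k + 1) = (q : ℂ) • (x (k + 1) * uMat q x k i j)) ∧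
      (∀ i j, star (x (k + 1)) * uMat q x k i j =
        (q : ℂ) • (uMat q x k i j * star (x (k + 1)))) ∧
      uMat q x k * uMat q x k = (c - star (x (k + 1)) * x (k + 1)) • 1 ∧
      ((q : ℂ) ^ 2)⁻¹ • (c - star (x (k + 1)) * x (k + 1)) + x (k + 1) * star (x (k + 1)) = c := by
  have hq' : (q : ℂ) ≠ 0 := by exact_mod_cast hq
  set u := uMat q x k with hu
  set a := x (k + 1) with ha
  have h1 : (c • (1 : Matrix (Fin (2 ^ (k+1))) (Fin (2 ^ (k+1))) A)) =
      Matrix.reindex (eBlk k) (eBlk k) (Matrix.fromBlocks (c • (1 : Matrix (Fin (2 ^ k)) (Fin (2 ^ k)) A)) 0 0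
        (c • (1 : Matrix (Fin (2 ^ k)) (Fin (2 ^ k)) A))) := by
    have : Matrix.fromBlocks (c • (1 : Matrix (Fin (2 ^ k)) (Fin (2 ^ k)) A)) 0 0
        (c • (1 : Matrix (Fin (2 ^ k)) (Fin (2 ^ k)) A))
        = c • 1 := by
      rw [← Matrix.fromBlocks_one, Matrix.fromBlocks_smul, smul_zero]
    rw [this]
    ext i j
    simp [Matrix.one_apply]
  have hmul : ∀ M N : Matrix (Fin (2 ^ k) ⊕ Fin (2 ^ k)) (Fin (2 ^ k) ⊕ Fin (2 ^ k)) A,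
      Matrix.reindex (eBlk k) (eBlk k) M * Matrix.reindex (eBlk k) (eBlk k) N =
      Matrix.reindex (eBlk k) (eBlk k) (M * N) := by
    intro M N
    simp
  rw [uMat_succ', h1, hmul, (Matrix.reindex (eBlk k) (eBlk k)).injective.eq_iff,
    Matrix.fromBlocks_multiply, Matrix.fromBlocks_inj, ← hu, ← ha]
  have hr : ∀ (b : A) (i j), (u * (b • (1 : Matrix (Fin (2 ^ k)) (Fin (2 ^ k)) A))) i j
      = u i j * b := by
    intro b i j
    simp [Matrix.mul_apply, Matrix.one_apply]
  have hl : ∀ (b : A) (i j), ((b • (1 : Matrix (Fin (2 ^ k)) (Fin (2 ^ k)) A)) * u) i j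
      = b * u i j := by
    intro b i j
    simp
  have hss : ∀ b d : A, (b • (1 : Matrix (Fin (2 ^ k)) (Fin (2 ^ k)) A)) * (d • 1)
      = (b * d) • 1 := by
    intro b d
    rw [smul_mul_assoc, one_mul, smul_smul]
  have e12 : ((q : ℂ)⁻¹ • u * (a • 1) + a • 1 * -u = 0) ↔
      ∀ i j, u i j * a = (q : ℂ) • (a * u i j) := by
    rw [← Matrix.ext_iff]
    refine forall_congr' fun i => forall_congr' fun j => ?_
    rw [smul_mul_assoc, mul_neg, Matrix.add_apply, Matrix.smul_apply, Matrix.neg_apply, hr, hl,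
      Matrix.zero_apply, ← sub_eq_add_neg, sub_eq_zero, inv_smul_eq_iff₀ hq']
  have e21 : (star a • 1 * (q : ℂ)⁻¹ • u + -u * (star a • 1) = 0) ↔
      ∀ i j, star a * u i j = (q : ℂ) • (u i j * star a) := by
    rw [← Matrix.ext_iff]
    refine forall_congr' fun i => forall_congr' fun j => ?_
    rw [mul_smul_comm, neg_mul, Matrix.add_apply, Matrix.smul_apply, Matrix.neg_apply, hr, hl,
      Matrix.zero_apply, ← sub_eq_add_neg, sub_eq_zero, inv_smul_eq_iff₀ hq']
  rw [e12, e21, hss, hss, neg_mul_neg, smul_mul_smul_comm]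
  have e22 : ((star a * a) • (1 : Matrix (Fin (2 ^ k)) (Fin (2 ^ k)) A) + u * u = c • 1) ↔
      u * u = (c - star a * a) • 1 := by
    rw [sub_smul, eq_sub_iff_add_eq, add_comm]
  rw [e22]
  have hqq : (q : ℂ)⁻¹ * (q : ℂ)⁻¹ = ((q : ℂ) ^ 2)⁻¹ := by rw [pow_two, mul_inv]
  rw [hqq]
  have e11 : u * u = (c - star a * a) • 1 →
      ((((q : ℂ) ^ 2)⁻¹ • (u * u) + (a * star a) • (1 : Matrix (Fin (2 ^ k)) (Fin (2 ^ k)) A)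
        = c • 1) ↔ ((q : ℂ) ^ 2)⁻¹ • (c - star a * a) + a * star a = c) := by
    intro h
    rw [h]
    constructor
    · intro h
      have z : Fin (2 ^ k) := ⟨0, by positivity⟩
      have := congrFun (congrFun h z) z
      simpa using this
    · intro h
      ext i j
      by_cases hij : i = j
      · subst hij
        simpa using h
      · simp [Matrix.one_apply, hij]
  constructor
  · rintro ⟨g1, g2, g3, g4⟩
    exact ⟨g2, g3, g4, (e11 g4).1 g1⟩
  · rintro ⟨g2, g3, g4, g1⟩
    exact ⟨(e11 g4).2 g1, g2, g3, g4⟩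

/-- The shifted generators. -/
def shiftGen {A : Type*} [Ring A] (x : ℕ → A) : ℕ → A :=
  fun i => if i = 0 then 0 else if i = 1 then x 0 else x (i - 1)

theorem uMat_shift_mem {A : Type*} [Ring A] [Algebra ℂ A] [StarRing A] (q : ℝ) (x : ℕ → A)
    (S : Submodule ℂ A) (k : ℕ) :
    (∀ i j, uMat q (shiftGen x) (k + 1) i j ∈ S) ↔
      ∀ m, m ≤ k → x m ∈ S ∧ star (x m) ∈ S := by
  have hs : ∀ m, shiftGen x (m + 1) = x m := by
    intro m
    cases m <;> simp [shiftGen]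
  rw [uMat_mem]
  constructor
  · rintro ⟨-, h⟩ m hm
    simpa [hs] using h (m + 1) (by omega) (by omega)
  · intro h
    refine ⟨by simp [shiftGen], fun m h1 h2 => ?_⟩
    obtain ⟨m, rfl⟩ : ∃ l, m = l + 1 := ⟨m - 1, by omega⟩
    rw [hs]
    exact h m (by omega)

theorem uMat_shift_sq {A : Type*} [Ring A] [Algebra ℂ A] [StarRing A]
    [StarModule ℂ A] (q : ℝ) (hq : q ≠ 0) (x : ℕ → A)
    (hx0 : star (x 0) = x 0) (n : ℕ) : ∀ c : A,
    (uMat q (shiftGen x) (n + 1) * uMat q (shiftGen x) (n + 1) = c • 1 ↔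
  (∀ i j : ℕ, i < j → j ≤ n → x i * x j = (q : ℂ) • (x j * x i)) ∧
  (∀ i j : ℕ, i ≤ n → j ≤ n → i ≠ j →
    star (x i) * x j = (q : ℂ) • (x j * star (x i))) ∧
  (∀ i : ℕ, 1 ≤ i → i ≤ n →
    x i * star (x i) - star (x i) * x i = (1 - ((q : ℂ) ^ 2)⁻¹) • sEven x (i - 1)) ∧
  sEven x n = c) := by
  have hs : ∀ m, shiftGen x (m + 1) = x m := by
    intro m
    cases m <;> simp [shiftGen]
  have hstar : ∀ a b : A, a * b = (q : ℂ) • (b * a) →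
      star b * star a = (q : ℂ) • (star a * star b) := by
    intro a b h
    have := congrArg star h
    simpa [star_smul] using this
  induction n with
  | zero =>
    intro c
    rw [uMat_sq_step q hq, hs]
    have h0 : ∀ i j, uMat q (shiftGen x) 0 i j = 0 := by simp [uMat, shiftGen]
    have h0' : uMat q (shiftGen x) 0 = 0 := by ext i j; exact h0 i j
    simp only [h0', hx0]
    constructor
    · rintro ⟨-, -, h3, h4⟩
      have := congrFun (congrFun h3 0) 0
      simp at this
      refine ⟨fun i j _ _ => by omega, fun i j _ _ _ => by omega, fun i _ _ => by omega, ?_⟩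
      rw [← this] at h4
      simpa [sEven] using h4
    · rintro ⟨-, -, -, h⟩
      simp only [sEven] at h
      subst h
      simp
  | succ n ih =>
    intro c
    rw [uMat_sq_step q hq, hs, ih]
    let S1 : Submodule ℂ A :=
      { carrier := {a | a * x (n + 1) = (q : ℂ) • (x (n + 1) * a)}
        add_mem' := by
          intro a b ha hb
          simp only [Set.mem_setOf_eq] at *
          rw [add_mul, mul_add, smul_add, ha, hb]
        zero_mem' := by simp
        smul_mem' := by
          intro r a ha
          simp only [Set.mem_setOf_eq] at *
          rw [smul_mul_assoc, mul_smul_comm, ha, smul_comm] }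
    let S2 : Submodule ℂ A :=
      { carrier := {a | star (x (n + 1)) * a = (q : ℂ) • (a * star (x (n + 1)))}
        add_mem' := by
          intro a b ha hb
          simp only [Set.mem_setOf_eq] at *
          rw [add_mul, mul_add, smul_add, ha, hb]
        zero_mem' := by simp
        smul_mem' := by
          intro r a ha
          simp only [Set.mem_setOf_eq] at *
          rw [smul_mul_assoc, mul_smul_comm, ha, smul_comm] }
    have m1 := uMat_shift_mem q x S1 n
    have m2 := uMat_shift_mem q x S2 n
    have hS1 : ∀ a, a ∈ S1 ↔ a * x (n + 1) = (q : ℂ) • (x (n + 1) * a) := fun a => Iff.rfl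
    have hS2 : ∀ a, a ∈ S2 ↔ star (x (n + 1)) * a = (q : ℂ) • (a * star (x (n + 1))) :=
      fun a => Iff.rfl
    simp only [hS1] at m1
    simp only [hS2] at m2
    rw [m1, m2]
    constructor
    · rintro ⟨g1, g2, ⟨r1, r2, r3, r4⟩, g4⟩
      refine ⟨fun i j hij hj => ?_, fun i j hi hj hij => ?_, fun i h1 hi => ?_, ?_⟩
      · rcases Nat.lt_or_ge n j with h | h
        · obtain rfl : j = n + 1 := by omega
          exact (g1 i (by omega)).1
        · exact r1 i j hij h
      · rcases Nat.lt_or_ge n j with h | h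
        · obtain rfl : j = n + 1 := by omega
          exact (g1 i (by omega)).2
        · rcases Nat.lt_or_ge n i with h' | h'
          · obtain rfl : i = n + 1 := by omega
            exact (g2 j (by omega)).1
          · exact r2 i j h' h hij
      · rcases Nat.lt_or_ge n i with h | h
        · obtain rfl : i = n + 1 := by omega
          rw [← r4] at g4
          have hc : c = sEven x n + star (x (n + 1)) * x (n + 1) := by rw [r4]; abel
          rw [hc] at g4
          rw [Nat.add_sub_cancel, sub_smul, one_smul, sub_eq_sub_iff_add_eq_add, ← g4]
          abel
        · exact r3 i h1 h
      · rw [sEven, r4]; abel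
    · rintro ⟨r1, r2, r3, r4⟩
      have hc : sEven x n = c - star (x (n + 1)) * x (n + 1) := by
        rw [← r4, sEven]; abel
      refine ⟨fun m hm => ⟨r1 _ _ (by omega) le_rfl, r2 _ _ (by omega) le_rfl (by omega)⟩,
        fun m hm => ⟨r2 _ _ le_rfl (by omega) (by omega),
          hstar _ _ (r1 _ _ (by omega) le_rfl)⟩,
        ⟨fun i j h1 h2 => r1 i j h1 (by omega),
          fun i j h1 h2 h3 => r2 i j (by omega) (by omega) h3,
          fun i h1 h2 => r3 i h1 (by omega), hc⟩, ?_⟩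
      have := r3 (n + 1) (by omega) le_rfl
      rw [Nat.add_sub_cancel, sub_smul, one_smul, sub_eq_sub_iff_add_eq_add] at this
      rw [← hc, add_comm, this, ← r4, sEven]

/-- The product index equivalence. -/
def ePrd (n : ℕ) : Fin (2 ^ n) × Fin 2 ≃ Fin (2 ^ (n + 1)) :=
  finProdFinEquiv.trans (finCongr (by rw [pow_succ]))

theorem ePrd_inl (n : ℕ) (p : Fin (2 ^ n)) (a : Fin 2) :
    ePrd (n + 1) (eBlk n (.inl p), a) = eBlk (n + 1) (.inl (ePrd n (p, a))) := by
  apply Fin.ext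
  simp [ePrd, eBlk]

theorem ePrd_inr (n : ℕ) (p : Fin (2 ^ n)) (a : Fin 2) :
    ePrd (n + 1) (eBlk n (.inr p), a) = eBlk (n + 1) (.inr (ePrd n (p, a))) := by
  apply Fin.ext
  simp [ePrd, eBlk]
  ring

theorem uMat_shift_kron {A : Type*} [Ring A] [Algebra ℂ A] [StarRing A]
    (q : ℝ) (x : ℕ → A) (hx0 : star (x 0) = x 0) (n : ℕ) :
    ∀ (p r : Fin (2 ^ n)) (a b : Fin 2),
    uMat q (shiftGen x) (n + 1) (ePrd n (p, a)) (ePrd n (r, b)) =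
      uMat q (fun j => if j = 0 then !![0, x 0; x 0, 0]
            else x j • (1 : Matrix (Fin 2) (Fin 2) A)) n p r a b := by
  have hs : ∀ m, shiftGen x (m + 1) = x m := by
    intro m
    cases m <;> simp [shiftGen]
  induction n with
  | zero =>
    intro p r a b
    have hp : ∀ p : Fin (2 ^ 0), ePrd 0 (p, 0) = eBlk 0 (.inl 0) := by
      intro p; obtain rfl : p = 0 := Subsingleton.elim (α := Fin 1) _ _; rfl
    have hp1 : ∀ p : Fin (2 ^ 0), ePrd 0 (p, 1) = eBlk 0 (.inr 0) := by
      intro p; obtain rfl : p = 0 := Subsingleton.elim (α := Fin 1) _ _; rfl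
    have h0 : ∀ i j, uMat q (shiftGen x) 0 i j = 0 := by simp [uMat, shiftGen]
    fin_cases a <;> fin_cases b <;>
      simp only [Fin.zero_eta, Fin.mk_one, hp, hp1, uMat_succ_apply] <;>
      simp [hs, hx0, h0] <;> simp [uMat]
  | succ n ih =>
    intro p r a b
    obtain ⟨p, rfl⟩ := (eBlk n).surjective p
    obtain ⟨r, rfl⟩ := (eBlk n).surjective r
    have hinj : ∀ p r : Fin (2 ^ n), (ePrd n (p, a) = ePrd n (r, b)) ↔ (p = r ∧ a = b) := by
      intro p r
      rw [(ePrd n).injective.eq_iff, Prod.mk.injEq]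
    rcases p with p | p <;> rcases r with r | r <;>
      simp only [ePrd_inl, ePrd_inr, uMat_succ_apply, Matrix.fromBlocks_apply₁₁,
        Matrix.fromBlocks_apply₁₂, Matrix.fromBlocks_apply₂₁, Matrix.fromBlocks_apply₂₂,
        Matrix.smul_apply, Matrix.neg_apply, ih, hs]
    · by_cases h1 : p = r <;> by_cases h2 : a = b <;>
        simp [Matrix.one_apply, hinj, h1, h2]
    · by_cases h1 : p = r <;> by_cases h2 : a = b <;>
        simp [Matrix.one_apply, hinj, h1, h2, Matrix.star_apply, eq_comm]

/-- Substituting `x₁ ↦ x₀ (= x₁*)` and `x_{j+1} ↦ x_j` in the odd unipotent `u_{(2n+1)}`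
yields the matrix obtained from `u_{(2n)}` by the entrywise Kronecker substitution
`x₀ ↦ [[0,x₀],[x₀,0]]`, `x_j ↦ x_j · I₂`; consequently the unipotency of this matrix is
equivalent to the `S^{2n}_q` relations (so `A(S^{2n}_q)` is the quotient of
`A(S^{2n+1}_q)` by the *-ideal generated by `x₁ - x₁*`). -/
theorem uMat_substitution_even_in_odd {A : Type*} [Ring A] [Algebra ℂ A] [StarRing A]
    [StarModule ℂ A] (q : ℝ) (hq : q ≠ 0) (n : ℕ) (hn : 1 ≤ n) (x : ℕ → A)
    (hx0 : star (x 0) = x 0) :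
    (uMat q (fun i => if i = 0 then 0 else if i = 1 then x 0 else x (i - 1)) (n + 1) =
      Matrix.reindex (finProdFinEquiv.trans (finCongr (by rw [pow_succ])))
        (finProdFinEquiv.trans (finCongr (by rw [pow_succ])))
        (Matrix.of fun (p r : Fin (2 ^ n) × Fin 2) =>
          uMat q (fun j => if j = 0 then !![0, x 0; x 0, 0]
            else x j • (1 : Matrix (Fin 2) (Fin 2) A)) n p.1 r.1 p.2 r.2)) ∧
    (uMat q (fun i => if i = 0 then 0 else if i = 1 then x 0 else x (i - 1)) (n + 1) *
        uMat q (fun i => if i = 0 then 0 else if i = 1 then x 0 else x (i - 1)) (n + 1) = 1 ↔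
      EvenSphereRel q n x) := by
  refine ⟨?_, ?_⟩
  · ext i j
    obtain ⟨⟨p, a⟩, rfl⟩ := (ePrd n).surjective i
    obtain ⟨⟨r, b⟩, rfl⟩ := (ePrd n).surjective j
    refine (uMat_shift_kron q x hx0 n p r a b).trans ?_
    change _ = Matrix.reindex (ePrd n) (ePrd n) _ _ _
    simp
  · have := uMat_shift_sq q hq x hx0 n 1
    rw [one_smul] at this
    exact this
end

section
/- Let q ∈ ℝ with |q| > 1, n ≥ 1, and let H = ℓ²(ℕⁿ). Let F be the free unital complex *-algebra on generators x₀, x₁, …, x_n with x₀ self-adjoint, and let Ψ₊, Ψ₋ : F → B(H) be the unital *-homomorphisms determined by sending the generators to the operators of the representations ψ^{(2n)}_+ and ψ^{(2n)}_− respectively, i.e. Ψ±(x₀) e_k = ± q^{−(k₀+⋯+k_{n−1})} e_k and Ψ±(x_i) e_k = (1 − q^{−2k_{i−1}})^{1/2} q^{−(k_i+⋯+k_{n−1})} e_{k−δ_{i−1}} for i = 1, …, n. Then for every element w ∈ F, the difference Ψ₊(w) − Ψ₋(w) is a trace-class operator on H. (Consequently the pair (ψ^{(2n)}_+, ψ^{(2n)}_−)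 with F = [[0,1],[1,0]] defines a 1-summable even Fredholm module over A(S^{2n}_q).) -/
/-- The standard orthonormal basis vector of `ℓ²(ℕⁿ)` at `k`. -/
noncomputable def eVec (n : ℕ) (k : Fin n → ℕ) : lp (fun _ : Fin n → ℕ => ℂ) 2 :=
  lp.single 2 k 1

/-- A bounded operator on `ℓ²(ℕⁿ)` is Hilbert–Schmidt if the squared norms of the images
of the standard basis vectors are summable. -/
def IsHilbertSchmidt {n : ℕ}
    (T : lp (fun _ : Fin n → ℕ => ℂ) 2 →L[ℂ] lp (fun _ : Fin n → ℕ => ℂ) 2) : Prop :=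
  Summable fun k : Fin n → ℕ => ‖T (eVec n k)‖ ^ 2

/-- A bounded operator is trace class iff it is a product of two Hilbert–Schmidt
operators. -/
def IsTraceClass {n : ℕ}
    (T : lp (fun _ : Fin n → ℕ => ℂ) 2 →L[ℂ] lp (fun _ : Fin n → ℕ => ℂ) 2) : Prop :=
  ∃ A B, IsHilbertSchmidt A ∧ IsHilbertSchmidt B ∧ T = A * B

section Helpers

/-- `x` can be moved through `R` from both sides. -/
def CommThru {A : Type*} [Ring A] (R x : A) : Prop :=
  (∃ a, R * x = a * R) ∧ (∃ a, x * R = R * a)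

theorem CommThru.add' {A : Type*} [Ring A] {R x y : A} (hx : CommThru R x) (hy : CommThru R y) :
    CommThru R (x + y) := by
  obtain ⟨⟨a, ha⟩, b, hb⟩ := hx
  obtain ⟨⟨c, hc⟩, d, hd⟩ := hy
  exact ⟨⟨a + c, by rw [mul_add, ha, hc, add_mul]⟩, ⟨b + d, by rw [add_mul, hb, hd, mul_add]⟩⟩

theorem CommThru.mul' {A : Type*} [Ring A] {R x y : A} (hx : CommThru R x) (hy : CommThru R y) :
    CommThru R (x * y) := by
  obtain ⟨⟨a, ha⟩, b, hb⟩ := hx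
  obtain ⟨⟨c, hc⟩, d, hd⟩ := hy
  exact ⟨⟨a * c, by rw [← mul_assoc, ha, mul_assoc, hc, mul_assoc]⟩,
    ⟨b * d, by rw [mul_assoc, hd, ← mul_assoc, hb, mul_assoc]⟩⟩

theorem CommThru.star' {A : Type*} [Ring A] [StarRing A] {R x : A} (hR : star R = R)
    (hx : CommThru R x) : CommThru R (star x) := by
  obtain ⟨⟨a, ha⟩, b, hb⟩ := hx
  refine ⟨⟨star b, ?_⟩, ⟨star a, ?_⟩⟩
  · have := congrArg star hb
    simpa [hR] using this
  · have := congrArg star ha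
    simpa [hR] using this

theorem good_of_adjoin {A : Type*} [Ring A] [StarRing A] [Algebra ℂ A] [StarModule ℂ A] {R : A}
    (hR : star R = R) (s : Set (A × A))
    (hs : ∀ p ∈ s, CommThru R p.1 ∧ CommThru R p.2 ∧ ∃ B, p.1 - p.2 = R * B * R)
    (w : A × A) (hw : w ∈ StarAlgebra.adjoin ℂ s) :
    CommThru R w.1 ∧ CommThru R w.2 ∧ ∃ B, w.1 - w.2 = R * B * R := by
  induction hw using StarAlgebra.adjoin_induction with
  | mem x h => exact hs x h
  | algebraMap r =>
    have h : CommThru R (algebraMap ℂ A r) :=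
      ⟨⟨_, (Algebra.commutes r R).symm⟩, ⟨_, Algebra.commutes r R⟩⟩
    exact ⟨h, h, 0, by simp⟩
  | add x y _ _ hx hy =>
    obtain ⟨h1, h2, B, hB⟩ := hx
    obtain ⟨h3, h4, C, hC⟩ := hy
    refine ⟨h1.add' h3, h2.add' h4, B + C, ?_⟩
    rw [mul_add, add_mul, ← hB, ← hC]
    simp only [Prod.fst_add, Prod.snd_add]
    abel
  | mul x y _ _ hx hy =>
    obtain ⟨h1, h2, B, hB⟩ := hx
    obtain ⟨h3, h4, C, hC⟩ := hy
    refine ⟨h1.mul' h3, h2.mul' h4, ?_⟩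
    obtain ⟨⟨a, ha⟩, -⟩ := h3
    obtain ⟨-, ⟨b, hb⟩⟩ := h2
    refine ⟨B * a + b * C, ?_⟩
    have : x.1 * y.1 - x.2 * y.2 = (x.1 - x.2) * y.1 + x.2 * (y.1 - y.2) := by noncomm_ring
    simp only [Prod.fst_mul, Prod.snd_mul]
    rw [this, hB, hC, mul_assoc (R * B), ha, mul_assoc R C R, ← mul_assoc x.2, hb]
    noncomm_ring
  | star x _ hx =>
    obtain ⟨h1, h2, B, hB⟩ := hx
    refine ⟨h1.star' hR, h2.star' hR, star B, ?_⟩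
    have := congrArg star hB
    simp only [star_sub, star_mul, hR] at this
    simpa [mul_assoc] using this

theorem summable_pow_sum (t : ℝ) (h0 : 0 ≤ t) (h1 : t < 1) (n : ℕ) :
    Summable fun k : Fin n → ℕ => t ^ (∑ j, k j) := by
  induction n with
  | zero => exact Summable.of_finite
  | succ n ih =>
    have h := (summable_geometric_of_lt_one h0 h1).mul_of_nonneg ih
      (fun _ => by positivity) (fun _ => by positivity)
    rw [← (Fin.consEquiv (fun _ : Fin (n + 1) => ℕ)).summable_iff]
    refine h.congr fun x => ?_
    simp [Fin.consEquiv, Fin.sum_univ_succ, pow_add]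

/-- Diagonal operator. -/
noncomputable def diagOp (n : ℕ) (d : (Fin n → ℕ) → ℝ) (hd : ∀ k, |d k| ≤ 1) :
    lp (fun _ : Fin n → ℕ => ℂ) 2 →L[ℂ] lp (fun _ : Fin n → ℕ => ℂ) 2 :=
  lp.mapCLM 2 (fun k => ((d k : ℝ) : ℂ) • ContinuousLinearMap.id ℂ ℂ) zero_le_one
    (fun k => by simpa [norm_smul] using hd k)

theorem diagOp_coe (n : ℕ) (d : (Fin n → ℕ) → ℝ) (hd : ∀ k, |d k| ≤ 1)
    (f : lp (fun _ : Fin n → ℕ => ℂ) 2) (k : Fin n → ℕ) :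
    diagOp n d hd f k = (d k : ℂ) * f k := by
  simp [diagOp]

theorem diagOp_eVec (n : ℕ) (d : (Fin n → ℕ) → ℝ) (hd : ∀ k, |d k| ≤ 1) (k : Fin n → ℕ) :
    diagOp n d hd (eVec n k) = (d k : ℂ) • eVec n k := by
  ext j
  rw [diagOp_coe]
  by_cases h : j = k
  · subst h; rw [lp.coeFn_smul]; simp [eVec]
  · rw [lp.coeFn_smul]; simp [eVec, h]

theorem diagOp_star (n : ℕ) (d : (Fin n → ℕ) → ℝ) (hd : ∀ k, |d k| ≤ 1) :
    star (diagOp n d hd) = diagOp n d hd := by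
  rw [ContinuousLinearMap.star_eq_adjoint]
  symm
  rw [ContinuousLinearMap.eq_adjoint_iff]
  intro f g
  rw [lp.inner_eq_tsum, lp.inner_eq_tsum]
  congr 1
  ext k
  rw [diagOp_coe, diagOp_coe]
  simp
  ring

theorem op_ext {n : ℕ}
    {S T : lp (fun _ : Fin n → ℕ => ℂ) 2 →L[ℂ] lp (fun _ : Fin n → ℕ => ℂ) 2}
    (h : ∀ k, S (eVec n k) = T (eVec n k)) : S = T := by
  refine lp.ext_continuousLinearMap (by simp) fun k => ?_
  ext1
  simpa [eVec] using h k

theorem op_mul_ap {n : ℕ}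
    (S T : lp (fun _ : Fin n → ℕ => ℂ) 2 →L[ℂ] lp (fun _ : Fin n → ℕ => ℂ) 2)
    (f : lp (fun _ : Fin n → ℕ => ℂ) 2) : (S * T) f = S (T f) := rfl

theorem op_smul_ap {n : ℕ} (c : ℂ)
    (S : lp (fun _ : Fin n → ℕ => ℂ) 2 →L[ℂ] lp (fun _ : Fin n → ℕ => ℂ) 2)
    (f : lp (fun _ : Fin n → ℕ => ℂ) 2) : (c • S) f = c • S f := rfl

theorem op_sub_ap {n : ℕ}
    (S T : lp (fun _ : Fin n → ℕ => ℂ) 2 →L[ℂ] lp (fun _ : Fin n → ℕ => ℂ) 2)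
    (f : lp (fun _ : Fin n → ℕ => ℂ) 2) : (S - T) f = S f - T f := rfl

theorem norm_eVec (n : ℕ) (k : Fin n → ℕ) : ‖eVec n k‖ = 1 := by
  simp [eVec, lp.norm_single]

theorem hs_of_diag {n : ℕ} (d : (Fin n → ℕ) → ℝ) (hd : ∀ k, |d k| ≤ 1)
    (hsum : Summable fun k => d k ^ 2)
    (B : lp (fun _ : Fin n → ℕ => ℂ) 2 →L[ℂ] lp (fun _ : Fin n → ℕ => ℂ) 2) :
    IsHilbertSchmidt (B * diagOp n d hd) := by
  refine Summable.of_nonneg_of_le (fun _ => by positivity) (fun k => ?_)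
    (hsum.mul_left (‖B‖ ^ 2))
  rw [← sq_abs (d k), ← mul_pow]
  refine pow_le_pow_left₀ (norm_nonneg _) ?_ 2
  refine (B.le_opNorm _).trans ?_
  change ‖B‖ * ‖diagOp n d hd (eVec n k)‖ ≤ _
  rw [diagOp_eVec, norm_smul, norm_eVec]
  simp

theorem commThru_shift {n : ℕ} (r : ℝ) (hr : r ≠ 0)
    (hd : ∀ k : Fin n → ℕ, |r ^ (∑ j, k j)| ≤ 1)
    (X : lp (fun _ : Fin n → ℕ => ℂ) 2 →L[ℂ] lp (fun _ : Fin n → ℕ => ℂ) 2)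
    (i : Fin n) (c : (Fin n → ℕ) → ℂ) (hc : ∀ k, k i = 0 → c k = 0)
    (hX : ∀ k, X (eVec n k) = c k • eVec n (Function.update k i (k i - 1))) :
    CommThru (diagOp n _ hd) X := by
  have key : X * diagOp n _ hd = (r : ℂ) • (diagOp n _ hd * X) := by
    refine op_ext fun k => ?_
    simp only [op_mul_ap, op_smul_ap, hX, diagOp_eVec,
      map_smul]
    by_cases h : k i = 0
    · simp [hc k h]
    · have hs : ∑ j, k j = (∑ j, Function.update k i (k i - 1) j) + 1 := by
        rw [← Finset.add_sum_erase _ _ (Finset.mem_univ i),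
          ← Finset.add_sum_erase _ (Function.update k i (k i - 1)) (Finset.mem_univ i)]
        rw [Function.update_self, Finset.sum_congr rfl (g := k) (s₂ := Finset.univ.erase i)
          (f := Function.update k i (k i - 1))]
        · change k i + ∑ x ∈ Finset.univ.erase i, k x = k i - 1 + ∑ x ∈ Finset.univ.erase i, k x + 1
          omega
        · intro j hj
          rw [Function.update_of_ne (Finset.ne_of_mem_erase hj)]
      rw [hs]
      simp only [smul_smul]
      congr 1
      push_cast
      ring
  have hr' : (r : ℂ) ≠ 0 := by exact_mod_cast hr
  refine ⟨⟨(r : ℂ)⁻¹ • X, ?_⟩, ⟨(r : ℂ) • X, ?_⟩⟩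
  · rw [smul_mul_assoc, key, smul_smul, inv_mul_cancel₀ hr', one_smul]
  · rw [key, mul_smul_comm]

theorem commThru_diag {n : ℕ} (d : (Fin n → ℕ) → ℝ) (hd : ∀ k, |d k| ≤ 1)
    (X : lp (fun _ : Fin n → ℕ => ℂ) 2 →L[ℂ] lp (fun _ : Fin n → ℕ => ℂ) 2)
    (c : (Fin n → ℕ) → ℂ) (hX : ∀ k, X (eVec n k) = c k • eVec n k) :
    CommThru (diagOp n d hd) X := by
  have key : X * diagOp n d hd = diagOp n d hd * X := by
    refine op_ext fun k => ?_
    simp only [op_mul_ap, hX, diagOp_eVec, map_smul]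
    rw [smul_comm]
  exact ⟨⟨X, key.symm⟩, ⟨X, key⟩⟩

end Helpers

/-- For the two irreducible representations `ψ^{(2n)}_±` of `S^{2n}_q`, the difference
`ψ₊(w) - ψ₋(w)` is trace class for every element `w` of the *-algebra generated by the
generators; equivalently, for every `w` in the star subalgebra of `B(H) × B(H)` generated
by the pairs `(ψ₊(xᵢ), ψ₋(xᵢ))`, the difference `w.1 - w.2` is trace class.  (This makes
`(ψ₊ ⊕ ψ₋, F = [[0,1],[1,0]], γ)` a `1`-summable even Fredholm module over
`A(S^{2n}_q)`.) -/
theorem evenSphere_Fredholm_module_one_summable (q : ℝ) (hq : 1 < |q|) (n : ℕ) (hn : 1 ≤ n)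
    (Xp Xm : ℕ → (lp (fun _ : Fin n → ℕ => ℂ) 2 →L[ℂ] lp (fun _ : Fin n → ℕ => ℂ) 2))
    (hXp0 : ∀ k : Fin n → ℕ,
      Xp 0 (eVec n k) = (((q ^ (∑ j, k j))⁻¹ : ℝ) : ℂ) • eVec n k)
    (hXm0 : ∀ k : Fin n → ℕ,
      Xm 0 (eVec n k) = ((-(q ^ (∑ j, k j))⁻¹ : ℝ) : ℂ) • eVec n k)
    (hXpi : ∀ i : Fin n, ∀ k : Fin n → ℕ,
      Xp ((i : ℕ) + 1) (eVec n k) =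
        (((Real.sqrt (1 - (q ^ (2 * k i))⁻¹) *
          (q ^ (∑ j ∈ Finset.univ.filter fun j => i < j, k j))⁻¹ : ℝ)) : ℂ) •
          eVec n (Function.update k i (k i - 1)))
    (hXmi : ∀ i : Fin n, ∀ k : Fin n → ℕ,
      Xm ((i : ℕ) + 1) (eVec n k) =
        (((Real.sqrt (1 - (q ^ (2 * k i))⁻¹) *
          (q ^ (∑ j ∈ Finset.univ.filter fun j => i < j, k j))⁻¹ : ℝ)) : ℂ) •
          eVec n (Function.update k i (k i - 1)))
    (hXpis : ∀ i : Fin n, ∀ k : Fin n → ℕ,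
      star (Xp ((i : ℕ) + 1)) (eVec n k) =
        (((Real.sqrt (1 - (q ^ (2 * (k i + 1)))⁻¹) *
          (q ^ (∑ j ∈ Finset.univ.filter fun j => i < j, k j))⁻¹ : ℝ)) : ℂ) •
          eVec n (Function.update k i (k i + 1)))
    (hXmis : ∀ i : Fin n, ∀ k : Fin n → ℕ,
      star (Xm ((i : ℕ) + 1)) (eVec n k) =
        (((Real.sqrt (1 - (q ^ (2 * (k i + 1)))⁻¹) *
          (q ^ (∑ j ∈ Finset.univ.filter fun j => i < j, k j))⁻¹ : ℝ)) : ℂ) •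
          eVec n (Function.update k i (k i + 1))) :
    ∀ w ∈ StarAlgebra.adjoin ℂ
        {p : (lp (fun _ : Fin n → ℕ => ℂ) 2 →L[ℂ] lp (fun _ : Fin n → ℕ => ℂ) 2) ×
             (lp (fun _ : Fin n → ℕ => ℂ) 2 →L[ℂ] lp (fun _ : Fin n → ℕ => ℂ) 2) |
          ∃ i : ℕ, i ≤ n ∧ p = (Xp i, Xm i)},
      IsTraceClass (w.1 - w.2) := by
  have hq0 : 0 < |q| := by linarith
  set r : ℝ := Real.sqrt (|q|⁻¹) with hrdef
  have hr2 : r ^ 2 = |q|⁻¹ := Real.sq_sqrt (by positivity)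
  have hr0 : 0 < r := Real.sqrt_pos.2 (by positivity)
  have hlt : |q|⁻¹ < 1 := inv_lt_one_of_one_lt₀ hq
  have hr1 : r ≤ 1 := by nlinarith
  have hd : ∀ k : Fin n → ℕ, |r ^ (∑ j, k j)| ≤ 1 := fun k => by
    rw [abs_of_pos (by positivity)]
    exact pow_le_one₀ hr0.le hr1
  have hsum : Summable fun k : Fin n → ℕ => (r ^ (∑ j, k j)) ^ 2 := by
    refine (summable_pow_sum (|q|⁻¹) (by positivity) hlt n).congr fun k => ?_
    rw [← hr2, ← pow_mul, ← pow_mul, mul_comm]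
  intro w hw
  suffices hgen : _ by
    obtain ⟨-, -, B, hB⟩ := good_of_adjoin (R := diagOp n _ hd) (diagOp_star n _ hd) _ hgen w hw
    refine ⟨diagOp n _ hd, B * diagOp n _ hd, ?_, hs_of_diag _ hd hsum B, ?_⟩
    · simpa using hs_of_diag _ hd hsum 1
    · rw [hB, mul_assoc]
  rintro p ⟨i, hi, rfl⟩
  rcases i with _ | i
  · refine ⟨commThru_diag _ hd _ _ hXp0, commThru_diag _ hd _ _ hXm0, ?_⟩
    have hs : ∀ k : Fin n → ℕ, |(|q| / q) ^ (∑ j, k j)| ≤ 1 := fun k => by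
      rw [abs_pow, abs_div, abs_abs, div_self hq0.ne', one_pow]
    refine ⟨(2 : ℂ) • diagOp n _ hs, ?_⟩
    refine op_ext fun k => ?_
    simp only [op_mul_ap, op_smul_ap, diagOp_eVec,
      map_smul, op_sub_ap, hXp0, hXm0, smul_smul, ← sub_smul]
    congr 1
    have h : (q ^ (∑ j, k j))⁻¹ = r ^ (∑ j, k j) * (|q| / q) ^ (∑ j, k j) * r ^ (∑ j, k j) := by
      rw [← mul_pow, ← mul_pow, ← inv_pow]
      congr 1
      have : r * (|q| / q) * r = r ^ 2 * (|q| / q) := by ring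
      rw [this, hr2]
      field_simp
    rw [h]
    push_cast
    ring
  · have hc : ∀ k : Fin n → ℕ, k ⟨i, hi⟩ = 0 → (((Real.sqrt (1 - (q ^ (2 * k ⟨i, hi⟩))⁻¹) *
          (q ^ (∑ j ∈ Finset.univ.filter fun j => (⟨i, hi⟩ : Fin n) < j, k j))⁻¹ : ℝ)) : ℂ) = 0 := by
      intro k hk
      simp [hk]
    have hp := hXpi ⟨i, hi⟩
    have hm := hXmi ⟨i, hi⟩
    refine ⟨commThru_shift r hr0.ne' hd _ ⟨i, hi⟩ _ hc hp,
      commThru_shift r hr0.ne' hd _ ⟨i, hi⟩ _ hc hm, 0, ?_⟩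
    simp only [mul_zero, zero_mul]
    rw [sub_eq_zero]
    refine op_ext fun k => ?_
    exact (hp k).trans (hm k).symm
end
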